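/- Let R be a commutative ring with identity 1 ≠ 0, let n ≥ 4, and suppose the nontrivial ideals a₁, …, aₙ induce (in this cyclic order) a cycle of length n in the intersection graph Γ(R). Suppose moreover that the odd-indexed ideals a₁, a₃, …, a_{2⌊n/2⌋−1} are independent. If n is even, then the n ideals a₁ ∩ a₂, a₂ ∩ a₃, …, a_{n−1} ∩ aₙ, aₙ ∩ a₁ are nonzero and independent; if n is odd, then the n − 1 ideals a₁ ∩ a₂, a₂ ∩ a₃, …, a_{n−2} ∩ a_{n−1}, aₙ ∩ a₁ are nonzero and independent. In particular, R has a set of n (respectively n − 1) nonzero independent ideals. -/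

import Mathlib

/-!
The ideals `a (2k)`, `k < n / 2`, form an independent family. Each intersection of consecutive ideals
in the list contains exactly one even-indexed factor `a (2k)` with `k < n / 2`, and each `a (2k)`
contains exactly two of the intersections, `a (2k) ⊓ a (2k + 1)` and `a (2k - 1) ⊓ a (2k)`
(indices mod `n`). These two meet trivially, because `a (2k - 1)` and `a (2k + 1)` are at distance two
on an induced cycle of length at least four. Splitting every member of an independent family
into at most two disjoint pieces keeps the family independent (`independent_of_pieces`).
When `n` is odd, `a (n - 1)` is not among the independent ideals, so the intersection
`a (n - 2) ⊓ a (n - 1)` is the one that has to be left out.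
-/

/-- If the ideals `c k` are independent and each of them contains at most two of the ideals `b j`
(those with `f j = k`), which are disjoint, then the `b j` are independent. If
`x ∈ b i` equals `q + y` with `q` in the other piece of `c (f i)` and `y` in the sum of the
remaining `c l`, then `x - q` lies in `c (f i)` and in that sum, so `x = q`, hence `x = 0`. -/
lemma independent_of_pieces {R ι κ : Type*} [CommRing R] [Fintype ι] [Fintype κ]
    [DecidableEq ι] [DecidableEq κ] (b : ι → Ideal R) (c : κ → Ideal R) (f : ι → κ)
    (hc : ∀ k, c k ⊓ (∑ l ∈ Finset.univ.erase k, c l) = ⊥)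
    (hle : ∀ j, b j ≤ c (f j))
    (hdisj : ∀ i j, j ≠ i → f j = f i → b i ⊓ b j = ⊥)
    (htwo : ∀ i j k, j ≠ i → k ≠ i → f j = f i → f k = f i → j = k) (i : ι) :
    b i ⊓ (∑ j ∈ Finset.univ.erase i, b j) = ⊥ := by
  obtain ⟨Q, hQ, hQc, hQb⟩ : ∃ Q : Ideal R, b i ⊓ Q = ⊥ ∧ Q ≤ c (f i) ∧
      ∀ j, j ≠ i → f j = f i → b j ≤ Q := by
    by_cases h : ∃ p, p ≠ i ∧ f p = f i
    · obtain ⟨p, hp, hfp⟩ := h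
      refine ⟨b p, hdisj i p hp hfp, hfp ▸ hle p, fun j hj hfj => ?_⟩
      rw [htwo i j p hj hp hfj hfp]
    · exact ⟨⊥, by simp, bot_le, fun j hj hfj => (h ⟨j, hj, hfj⟩).elim⟩
  have hsum : (∑ j ∈ Finset.univ.erase i, b j) ≤
      Q ⊔ ∑ l ∈ Finset.univ.erase (f i), c l := by
    rw [Ideal.sum_eq_sup, Finset.sup_le_iff]
    intro j hj
    by_cases hf : f j = f i
    · exact (hQb j (Finset.ne_of_mem_erase hj) hf).trans le_sup_left
    · refine (hle j).trans (le_trans ?_ le_sup_right)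
      rw [Ideal.sum_eq_sup]
      exact Finset.le_sup (f := c) (Finset.mem_erase.2 ⟨hf, Finset.mem_univ _⟩)
  rw [eq_bot_iff]
  rintro x ⟨hx, hxs⟩
  obtain ⟨q, hq, y, hy, rfl⟩ := Submodule.mem_sup.1 (hsum hxs)
  have hyc : y ∈ c (f i) := by
    have := (c (f i)).sub_mem (hle i hx) (hQc hq)
    simpa using this
  have hy0 : y = 0 := by
    have : y ∈ c (f i) ⊓ (∑ l ∈ Finset.univ.erase (f i), c l) := ⟨hyc, hy⟩
    rwa [hc, Ideal.mem_bot] at this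
  subst hy0
  rw [add_zero] at hx ⊢
  rw [← hQ]
  exact ⟨hx, hq⟩

/-- The successor mod `n` as a case distinction, a form that linear arithmetic can use. -/
lemma succ_mod_eq_ite {i n : ℕ} (h : i < n) :
    (i + 1) % n = if i + 1 = n then 0 else i + 1 := by
  split_ifs with h1
  · rw [h1, Nat.mod_self]
  · exact Nat.mod_eq_of_lt (by omega)


/-- Suppose the nontrivial ideals `a 0, …, a (n-1)` (with `n ≥ 4`) induce,
in this cyclic order, a cycle of length `n` in the intersection graph `Γ(R)`, and that the
odd-indexed ideals `a₁, a₃, …, a_{2⌊n/2⌋−1}` (zero-indexed: `a 0, a 2, …, a (2(⌊n/2⌋−1))`)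
are independent.  If `n` is even, then the `n` ideals `a i ⊓ a (i+1)` (indices mod `n`) are
nonzero and independent; if `n` is odd, then the `n − 1` ideals
`a 0 ⊓ a 1, …, a (n-3) ⊓ a (n-2), a (n-1) ⊓ a 0` are nonzero and independent. -/
theorem intersectionGraph_cycle_independent_intersections
    (R : Type*) [CommRing R] [Nontrivial R] (n : ℕ) (hn : 4 ≤ n)
    (a : Fin n → Ideal R)
    (h_vertices : ∀ i, a i ≠ ⊥ ∧ a i ≠ ⊤)
    (h_inj : Function.Injective a)
    (h_cycle : ∀ i j, i ≠ j →
      (a i ⊓ a j ≠ ⊥ ↔ (j.val = (i.val + 1) % n ∨ i.val = (j.val + 1) % n)))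
    (h_odd_indep : ∀ k : Fin (n / 2),
      a ⟨2 * k.val, by have := k.isLt; omega⟩ ⊓
        (∑ l ∈ Finset.univ.erase k,
          a ⟨2 * l.val, by have := l.isLt; omega⟩) = ⊥) :
    (Even n →
      (∀ i : Fin n, a i ⊓ a ⟨(i.val + 1) % n, Nat.mod_lt _ (by omega)⟩ ≠ ⊥) ∧
      (∀ i : Fin n,
        (a i ⊓ a ⟨(i.val + 1) % n, Nat.mod_lt _ (by omega)⟩) ⊓
          (∑ j ∈ Finset.univ.erase i,
            a j ⊓ a ⟨(j.val + 1) % n, Nat.mod_lt _ (by omega)⟩) = ⊥)) ∧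
    (Odd n →
      (∀ i : Fin (n - 1),
        (if h : i.val < n - 2 then
            a ⟨i.val, by have := i.isLt; omega⟩ ⊓ a ⟨i.val + 1, by have := i.isLt; omega⟩
          else a ⟨n - 1, by omega⟩ ⊓ a ⟨0, by omega⟩) ≠ ⊥) ∧
      (∀ i : Fin (n - 1),
        (if h : i.val < n - 2 then
            a ⟨i.val, by have := i.isLt; omega⟩ ⊓ a ⟨i.val + 1, by have := i.isLt; omega⟩
          else a ⟨n - 1, by omega⟩ ⊓ a ⟨0, by omega⟩) ⊓
          (∑ j ∈ Finset.univ.erase i,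
            if h : j.val < n - 2 then
              a ⟨j.val, by have := j.isLt; omega⟩ ⊓ a ⟨j.val + 1, by have := j.isLt; omega⟩
            else a ⟨n - 1, by omega⟩ ⊓ a ⟨0, by omega⟩) = ⊥)) := by
  have hne : ∀ i j : Fin n, i.val ≠ j.val → (j.val = (i.val + 1) % n ∨ i.val = (j.val + 1) % n) →
      a i ⊓ a j ≠ ⊥ := fun i j hij h => (h_cycle i j (fun e => hij (congrArg _ e))).2 h
  have hbot : ∀ i j : Fin n, i.val ≠ j.val → j.val ≠ (i.val + 1) % n → i.val ≠ (j.val + 1) % n →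
      a i ⊓ a j = ⊥ := fun i j hij h1 h2 => by
    by_contra h
    rcases (h_cycle i j (fun e => hij (congrArg _ e))).1 h with h | h
    · exact h1 h
    · exact h2 h
  have hle_bot : ∀ (I : Ideal R) (i j : Fin n), I ≤ a i → I ≤ a j → i.val ≠ j.val →
      j.val ≠ (i.val + 1) % n → i.val ≠ (j.val + 1) % n → I = ⊥ :=
    fun I i j h1 h2 h3 h4 h5 => le_bot_iff.1 ((le_inf h1 h2).trans (hbot i j h3 h4 h5).le)
  constructor
  · intro hev
    have hev' : n % 2 = 0 := Nat.even_iff.1 hev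
    refine ⟨fun i => hne _ _ ?_ (Or.inl rfl), ?_⟩
    · have := i.isLt
      simp only [succ_mod_eq_ite this]
      split_ifs <;> omega
    -- The intersections with indices `2k` and `2k - 1` go to `a (2k)`; the last one wraps to `a 0`.
    · refine independent_of_pieces _ _ (fun j : Fin n =>
        (⟨if j.val = n - 1 then 0 else (j.val + 1) / 2, by
          have := j.isLt; split_ifs <;> omega⟩ : Fin (n / 2))) h_odd_indep ?_ ?_ ?_
      · intro j
        have := j.isLt
        rcases Nat.even_or_odd' j.val with ⟨k, hk | hk⟩
        · refine inf_le_left.trans (le_of_eq (congrArg a (Fin.ext ?_)))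
          dsimp only
          split_ifs <;> omega
        · refine inf_le_right.trans (le_of_eq (congrArg a (Fin.ext ?_)))
          simp only [succ_mod_eq_ite this]
          split_ifs <;> omega
      · intro i j hji hf
        have hi := i.isLt
        have hj := j.isLt
        have hv : j.val ≠ i.val := fun e => hji (Fin.ext e)
        have hf' := congrArg Fin.val hf
        dsimp only at hf'
        rcases Nat.even_or_odd' i.val with ⟨k, hk | hk⟩
        · refine hle_bot _ ⟨(i.val + 1) % n, Nat.mod_lt _ (by omega)⟩ j
            (inf_le_left.trans inf_le_right) (inf_le_right.trans inf_le_left) ?_ ?_ ?_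
          all_goals
            dsimp only
            rw [show (i.val + 1) % n = i.val + 1 from Nat.mod_eq_of_lt (by omega)]
            try rw [succ_mod_eq_ite (show i.val + 1 < n by omega)]
            try rw [succ_mod_eq_ite hj]
            split_ifs at hf' ⊢ <;> omega
        · have hj1 : j.val + 1 < n := by split_ifs at hf' <;> omega
          refine hle_bot _ ⟨(j.val + 1) % n, Nat.mod_lt _ (by omega)⟩ i
            (inf_le_right.trans inf_le_right) (inf_le_left.trans inf_le_left) ?_ ?_ ?_
          all_goals
            dsimp only
            rw [show (j.val + 1) % n = j.val + 1 from Nat.mod_eq_of_lt hj1]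
            try rw [succ_mod_eq_ite hj1]
            try rw [succ_mod_eq_ite hi]
            split_ifs at hf' ⊢ <;> omega
      · intro i j k hji hki hf hf2
        have hv : j.val ≠ i.val := fun e => hji (Fin.ext e)
        have hv2 : k.val ≠ i.val := fun e => hki (Fin.ext e)
        have hf' := congrArg Fin.val hf
        have hf2' := congrArg Fin.val hf2
        dsimp only at hf' hf2'
        apply Fin.ext
        split_ifs at hf' hf2' <;> omega
  · intro hod
    have hod' : n % 2 = 1 := Nat.odd_iff.1 hod
    refine ⟨fun i => ?_, ?_⟩
    · have := i.isLt
      split_ifs with h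
      · refine hne _ _ (by simp) (Or.inl ?_)
        exact (Nat.mod_eq_of_lt (by omega)).symm
      · refine hne _ _ (by dsimp only; omega) (Or.inl ?_)
        dsimp only
        rw [Nat.sub_add_cancel (by omega), Nat.mod_self]
    -- The last intersection, `a (n - 1) ⊓ a 0`, has index `n - 2` in this list.
    · refine independent_of_pieces _ _ (fun j : Fin (n - 1) =>
        (⟨if j.val = n - 2 then 0 else (j.val + 1) / 2, by
          have := j.isLt; split_ifs <;> omega⟩ : Fin (n / 2))) h_odd_indep ?_ ?_ ?_
      · intro j
        have := j.isLt
        dsimp only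
        by_cases h : j.val < n - 2
        · rw [dif_pos h]
          rcases Nat.even_or_odd' j.val with ⟨k, hk | hk⟩
          · refine inf_le_left.trans (le_of_eq (congrArg a (Fin.ext ?_)))
            dsimp only
            split_ifs <;> omega
          · refine inf_le_right.trans (le_of_eq (congrArg a (Fin.ext ?_)))
            dsimp only
            split_ifs <;> omega
        · rw [dif_neg h]
          refine inf_le_right.trans (le_of_eq (congrArg a (Fin.ext ?_)))
          dsimp only
          split_ifs <;> omega
      -- Disjointness is symmetric, so the piece `a (2k) ⊓ a (2k + 1)` may be taken first.
      · have key : ∀ i j : Fin (n - 1), i.val % 2 = 0 → j.val ≠ i.val →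
            (if j.val = n - 2 then 0 else (j.val + 1) / 2) =
              (if i.val = n - 2 then 0 else (i.val + 1) / 2) →
            (if h : i.val < n - 2 then
              a ⟨i.val, by have := i.isLt; omega⟩ ⊓ a ⟨i.val + 1, by have := i.isLt; omega⟩
            else a ⟨n - 1, by omega⟩ ⊓ a ⟨0, by omega⟩) ⊓
            (if h : j.val < n - 2 then
              a ⟨j.val, by have := j.isLt; omega⟩ ⊓ a ⟨j.val + 1, by have := j.isLt; omega⟩
            else a ⟨n - 1, by omega⟩ ⊓ a ⟨0, by omega⟩) = ⊥ := by
          intro i j hi2 hv hf'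
          have hi := i.isLt
          have hj := j.isLt
          rw [dif_pos (show i.val < n - 2 by omega)]
          by_cases h : j.val < n - 2
          · rw [dif_pos h]
            refine hle_bot _ ⟨i.val + 1, by omega⟩ ⟨j.val, by omega⟩
              (inf_le_left.trans inf_le_right) (inf_le_right.trans inf_le_left) ?_ ?_ ?_
            all_goals
              dsimp only
              try rw [succ_mod_eq_ite (show i.val + 1 < n by omega)]
              try rw [succ_mod_eq_ite (show j.val < n by omega)]
              split_ifs at hf' ⊢ <;> omega
          · rw [dif_neg h]
            refine hle_bot _ ⟨i.val + 1, by omega⟩ ⟨n - 1, by omega⟩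
              (inf_le_left.trans inf_le_right) (inf_le_right.trans inf_le_left) ?_ ?_ ?_
            all_goals
              dsimp only
              try rw [succ_mod_eq_ite (show i.val + 1 < n by omega)]
              try rw [succ_mod_eq_ite (show n - 1 < n by omega)]
              split_ifs at hf' ⊢ <;> omega
        intro i j hji hf
        have hi := i.isLt
        have hj := j.isLt
        have hv : j.val ≠ i.val := fun e => hji (Fin.ext e)
        have hf' := congrArg Fin.val hf
        dsimp only at hf'
        rcases Nat.mod_two_eq_zero_or_one i.val with h | h
        · exact key i j h hv hf'
        · rw [inf_comm]
          exact key j i (by split_ifs at hf' <;> omega) hv.symm hf'.symm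
      · intro i j k hji hki hf hf2
        have hi := i.isLt
        have hj := j.isLt
        have hk := k.isLt
        have hv : j.val ≠ i.val := fun e => hji (Fin.ext e)
        have hv2 : k.val ≠ i.val := fun e => hki (Fin.ext e)
        have hf' := congrArg Fin.val hf
        have hf2' := congrArg Fin.val hf2
        dsimp only at hf' hf2'
        apply Fin.ext
        split_ifs at hf' hf2' <;> omega
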